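/- arXiv:1612.06591 — 4 statements merged into one kernel-verified Lean document; each statement's English description precedes it below -/
import Mathlib

section
/- For every ν ∈ (0,1] ∖ {√3/2} one has c₄(ν) ≥ 0. -/
/-- Υ_ν := √(1 − ν²). -/
noncomputable def Ups (ν : ℝ) : ℝ := Real.sqrt (1 - ν ^ 2)

/-- w_ν := Υ_ν · cot(π Υ_ν / 2) for ν ∈ [0,1), with w_1 := 2/π (continuous extension). -/
noncomputable def w (ν : ℝ) : ℝ :=
  if ν = 1 then 2 / Real.pi else Ups ν * Real.cot (Real.pi * Ups ν / 2)

/-- η_ν := (√(9+4ν²) − 4ν)/(3(1 − 2 w_ν)) for ν ≠ √3/2, and η_{√3/2} := 1/(√3 (π−2)). -/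
noncomputable def eta (ν : ℝ) : ℝ :=
  if ν = Real.sqrt 3 / 2 then 1 / (Real.sqrt 3 * (Real.pi - 2))
  else (Real.sqrt (9 + 4 * ν ^ 2) - 4 * ν) / (3 * (1 - 2 * w ν))

/-- c₂(ν) as in the paper. -/
noncomputable def c2 (ν : ℝ) : ℝ :=
  (16 * ν * Real.sqrt (9 + 4 * ν ^ 2) / 9) *
    (72 * (5 + 2 * ν ^ 2) - 1764 * ν / Real.sqrt (9 + 4 * ν ^ 2)
      + (Real.sqrt (9 + 4 * ν ^ 2) - 4 * ν) ^ 2 *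
        (-4 + 9 * Real.pi ^ 2 * (Real.pi - 4) ^ 2 / (4 * (Real.pi - 2) ^ 2)
          - (3 * Real.pi * (4 - Real.pi) / (2 * (Real.pi - 2))
              + 3 * (Real.pi - 2) / (1 - 2 * w ν)) ^ 2))

/-- c₄(ν) := (c₂(ν)+3136ν²)²/(256ν²(9+4ν²)) − 3584ν² + 256ν√(9+4ν²)(1−η_ν²). -/
noncomputable def c4 (ν : ℝ) : ℝ :=
  (c2 ν + 3136 * ν ^ 2) ^ 2 / (256 * ν ^ 2 * (9 + 4 * ν ^ 2)) - 3584 * ν ^ 2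
    + 256 * ν * Real.sqrt (9 + 4 * ν ^ 2) * (1 - eta ν ^ 2)

/-!
Put `r = √(9 + 4ν²)`. Since `(r - 4ν)(r + 4ν) = 3(3 - 4ν²)`, the number `1 / η_ν` is `r + 4ν` times
half the slope of the chord of `ν² ↦ w_ν` ending at `ν² = 3/4`. The Mittag-Leffler expansion of the
cotangent writes this slope as a series of positive terms, and comparing it termwise with the slope
of the chord from `ν² = 0` to `ν² = 3/4` gives `η_ν ≤ (3 + ν²) / (r + 4ν)`, with equality at
`ν = 0`. Hence `η_ν ≤ 1 - 7ν/15`.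

In terms of `η_ν` the quantity `(c₂(ν) + 3136ν²) / (16νr)` loses its denominators and is at least
`54.2 ν`, while `r(1 - η_ν²) ≥ 2.53 ν`. Since `54.2² + 256 · 2.53 > 3584`, this proves
`c₄(ν) ≥ 0`.
-/

open Real

section MittagLeffler

theorem hasSum_pi_mul_cot_pi_mul_sub_inv {x : ℝ} (hx : (x : ℂ) ∈ Complex.integerComplement) :
    HasSum (fun n : ℕ ↦ 1 / (x - (n + 1)) + 1 / (x + (n + 1))) (π * cot (π * x) - 1 / x) := by
  rw [← Complex.hasSum_ofReal]
  convert (summable_cotTerm hx).hasSum using 1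
  · funext n
    simp [cotTerm]
  · simp only [cotTerm, ← cot_series_rep' hx]
    push_cast
    rfl

theorem ofReal_mem_integerComplement {x : ℝ} (h0 : 0 < x) (h1 : x < 1) :
    (x : ℂ) ∈ Complex.integerComplement := by
  rintro ⟨k, hk⟩
  obtain rfl : (k : ℝ) = x := mod_cast hk
  norm_cast at h0 h1
  lia

theorem hasSum_sq_div_sub_sq {u : ℝ} (hu : ((u / 2 : ℝ) : ℂ) ∈ Complex.integerComplement) :
    HasSum (fun n : ℕ ↦ u ^ 2 / (4 * ((n : ℝ) + 1) ^ 2 - u ^ 2))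
      (1 / 2 - π / 4 * (u * cot (π * u / 2))) := by
  have hadd_int (k : ℤ) : u / 2 + k ≠ 0 := mod_cast Complex.integerComplement_add_ne_zero hu k
  have hu0 : u ≠ 0 := fun h ↦ hadd_int 0 (by simp [h])
  have hterm (n : ℕ) : u ^ 2 / (4 * ((n : ℝ) + 1) ^ 2 - u ^ 2) =
      -(u / 4) * (1 / (u / 2 - (n + 1)) + 1 / (u / 2 + (n + 1))) := by
    have hsub : u / 2 - ((n : ℝ) + 1) ≠ 0 := by
      simpa [sub_eq_add_neg, add_comm] using hadd_int (-(n + 1))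
    have hadd : u / 2 + ((n : ℝ) + 1) ≠ 0 := by simpa using hadd_int (n + 1)
    have hsq : 4 * ((n : ℝ) + 1) ^ 2 - u ^ 2 ≠ 0 := by
      rw [show 4 * ((n : ℝ) + 1) ^ 2 - u ^ 2 = -4 * ((u / 2 - (n + 1)) * (u / 2 + (n + 1))) by ring]
      exact mul_ne_zero (by norm_num) (mul_ne_zero hsub hadd)
    rw [div_add_div _ _ hsub hadd, mul_div_assoc', div_eq_div_iff hsq (mul_ne_zero hsub hadd)]
    ring
  have hvalue : 1 / 2 - π / 4 * (u * cot (π * u / 2)) =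
      -(u / 4) * (π * cot (π * (u / 2)) - 1 / (u / 2)) := by
    rw [mul_div_assoc π u 2]
    field_simp
    ring
  rw [hvalue, funext hterm]
  exact (hasSum_pi_mul_cot_pi_mul_sub_inv hu).mul_left _

theorem hasSum_one_sub_sq_div {ν : ℝ} (h0 : 0 ≤ ν) (h1 : ν ≤ 1) :
    HasSum (fun n : ℕ ↦ (1 - ν ^ 2) / (4 * ((n : ℝ) + 1) ^ 2 - (1 - ν ^ 2)))
      (1 / 2 - π / 4 * w ν) := by
  obtain rfl | h1 := h1.eq_or_lt
  · have hw : 1 / 2 - π / 4 * w 1 = 0 := by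
      rw [w, if_pos rfl]
      field_simp
      norm_num
    rw [hw]
    simp
  · have hpos : 0 < 1 - ν ^ 2 := by nlinarith
    have hUps : Ups ν ^ 2 = 1 - ν ^ 2 := sq_sqrt hpos.le
    have hUps0 : 0 < Ups ν := sqrt_pos.mpr hpos
    rw [w, if_neg h1.ne, ← hUps]
    exact hasSum_sq_div_sub_sq
      (ofReal_mem_integerComplement (half_pos hUps0) (by nlinarith))

end MittagLeffler

section Chord

/-- The slope of the chord of `ν² ↦ w ν` between the points `μ²` and `ν²`, with the junk value `0`
when these points coincide. -/
noncomputable def chordSlope (μ ν : ℝ) : ℝ := (w ν - w μ) / (ν ^ 2 - μ ^ 2)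

variable {μ ν : ℝ}

theorem hasSum_chordSlope (hμ0 : 0 ≤ μ) (hμ1 : μ ≤ 1) (hν0 : 0 ≤ ν) (hν1 : ν ≤ 1)
    (hne : ν ≠ μ) :
    HasSum (fun n : ℕ ↦ 4 * ((n : ℝ) + 1) ^ 2 /
        ((4 * ((n : ℝ) + 1) ^ 2 - (1 - μ ^ 2)) * (4 * ((n : ℝ) + 1) ^ 2 - (1 - ν ^ 2))))
      (π / 4 * chordSlope μ ν) := by
  have hsq : ν ^ 2 - μ ^ 2 ≠ 0 := sub_ne_zero.mpr fun h ↦ hne ((sq_eq_sq₀ hν0 hμ0).mp h)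
  have hterm (n : ℕ) : 4 * ((n : ℝ) + 1) ^ 2 /
        ((4 * ((n : ℝ) + 1) ^ 2 - (1 - μ ^ 2)) * (4 * ((n : ℝ) + 1) ^ 2 - (1 - ν ^ 2))) =
      1 / (ν ^ 2 - μ ^ 2) * ((1 - μ ^ 2) / (4 * ((n : ℝ) + 1) ^ 2 - (1 - μ ^ 2)) -
        (1 - ν ^ 2) / (4 * ((n : ℝ) + 1) ^ 2 - (1 - ν ^ 2))) := by
    have hn : (1 : ℝ) ≤ ((n : ℝ) + 1) ^ 2 := one_le_pow₀ (by simp)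
    have hμ : 4 * ((n : ℝ) + 1) ^ 2 - (1 - μ ^ 2) ≠ 0 := by nlinarith
    have hν : 4 * ((n : ℝ) + 1) ^ 2 - (1 - ν ^ 2) ≠ 0 := by nlinarith
    rw [div_sub_div _ _ hμ hν, div_mul_div_comm, div_eq_div_iff (mul_ne_zero hμ hν)
      (mul_ne_zero hsq (mul_ne_zero hμ hν))]
    ring
  have hvalue : π / 4 * chordSlope μ ν =
      1 / (ν ^ 2 - μ ^ 2) * (1 / 2 - π / 4 * w μ - (1 / 2 - π / 4 * w ν)) := by
    rw [chordSlope]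
    ring
  rw [hvalue, funext hterm]
  exact ((hasSum_one_sub_sq_div hμ0 hμ1).sub (hasSum_one_sub_sq_div hν0 hν1)).mul_left _

-- Termwise, the claim is `3 (N - 1 + ν²) ≤ (3 + ν²) (N - 1)` for `N = 4 (n + 1)² ≥ 4`.
theorem three_mul_chordSlope_zero_le (hμ0 : 0 < μ) (hμ1 : μ ≤ 1) (hν0 : 0 ≤ ν)
    (hν1 : ν ≤ 1) (hne : ν ≠ μ) :
    3 * chordSlope μ 0 ≤ (3 + ν ^ 2) * chordSlope μ ν := by
  have hzero := (hasSum_chordSlope hμ0.le hμ1 le_rfl zero_le_one hμ0.ne).mul_left 3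
  have hν := (hasSum_chordSlope hμ0.le hμ1 hν0 hν1 hne).mul_left (3 + ν ^ 2)
  have hle := hasSum_le (fun n ↦ ?_) hzero hν
  · exact le_of_mul_le_mul_left (by linarith) (div_pos pi_pos four_pos)
  · have hN : (4 : ℝ) ≤ 4 * ((n : ℝ) + 1) ^ 2 := by
      linarith [one_le_pow₀ (n := 2) (show (1 : ℝ) ≤ (n : ℝ) + 1 by simp)]
    generalize 4 * ((n : ℝ) + 1) ^ 2 = N at hN
    have hNμ : 0 < N - (1 - μ ^ 2) := by nlinarith
    have hNν : 0 < N - (1 - ν ^ 2) := by nlinarith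
    have hN0 : 0 < N - (1 - 0 ^ 2) := by linarith
    rw [mul_div_assoc', mul_div_assoc', div_le_div_iff₀ (by positivity) (by positivity)]
    have hterm : 3 * (N - (1 - ν ^ 2)) ≤ (3 + ν ^ 2) * (N - (1 - 0 ^ 2)) := by nlinarith
    have hfactor : 0 ≤ N * (N - (1 - μ ^ 2)) := by positivity
    linarith [mul_le_mul_of_nonneg_left hterm hfactor]

theorem w_zero : w 0 = 0 := by
  simp [w, Ups, cot_eq_cos_div_sin]

theorem w_sqrt_three_div_two : w (√3 / 2) = 1 / 2 := by
  have hne : √3 / 2 ≠ 1 := fun h ↦ by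
    have := sq_sqrt (show (0 : ℝ) ≤ 3 by norm_num)
    nlinarith
  have hUps : Ups (√3 / 2) = 1 / 2 := by
    rw [Ups, sqrt_eq_iff_mul_self_eq (by norm_num [div_pow]) (by norm_num)]
    norm_num [div_pow]
  rw [w, if_neg hne, hUps, show π * (1 / 2) / 2 = π / 4 by ring, cot_eq_cos_div_sin,
    cos_pi_div_four, sin_pi_div_four, div_self (by positivity), mul_one]

theorem chordSlope_sqrt_three_div_two_zero : chordSlope (√3 / 2) 0 = 2 / 3 := by
  rw [chordSlope, w_zero, w_sqrt_three_div_two]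
  norm_num [div_pow]

theorem two_div_three_add_sq_le_chordSlope (h0 : 0 ≤ ν) (h1 : ν ≤ 1) (h : ν ≠ √3 / 2) :
    2 / (3 + ν ^ 2) ≤ chordSlope (√3 / 2) ν := by
  have hsq : √3 ^ 2 = 3 := sq_sqrt zero_le_three
  have hle := three_mul_chordSlope_zero_le (by positivity) (by nlinarith : √3 / 2 ≤ 1) h0 h1 h
  rw [chordSlope_sqrt_three_div_two_zero] at hle
  rw [div_le_iff₀ (by positivity)]
  linarith

end Chord

section Eta

variable {ν : ℝ}

theorem three_add_sq_le_sqrt (h : ν ^ 2 ≤ 1) : 3 + 0.6 * ν ^ 2 ≤ √(9 + 4 * ν ^ 2) :=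
  le_sqrt_of_sq_le (by nlinarith [sq_nonneg ν])

theorem sqrt_le_three_add (h0 : 0 ≤ ν) (h1 : ν ≤ 1) :
    √(9 + 4 * ν ^ 2) ≤ 3 + 0.61 * ν :=
  sqrt_le_iff.mpr ⟨by positivity, by nlinarith⟩

theorem chordSlope_pos (h0 : 0 ≤ ν) (h1 : ν ≤ 1) (h : ν ≠ √3 / 2) :
    0 < chordSlope (√3 / 2) ν :=
  lt_of_lt_of_le (by positivity) (two_div_three_add_sq_le_chordSlope h0 h1 h)

theorem one_sub_two_mul_w_ne_zero (h0 : 0 ≤ ν) (h1 : ν ≤ 1) (h : ν ≠ √3 / 2) :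
    1 - 2 * w ν ≠ 0 := fun hw ↦ by
  have hpos := chordSlope_pos h0 h1 h
  rw [chordSlope, w_sqrt_three_div_two, show w ν - 1 / 2 = 0 by linarith, zero_div] at hpos
  exact hpos.false

theorem inv_eta (h0 : 0 ≤ ν) (h : ν ≠ √3 / 2) :
    (eta ν)⁻¹ = (√(9 + 4 * ν ^ 2) + 4 * ν) * (chordSlope (√3 / 2) ν / 2) := by
  have hsq : √(9 + 4 * ν ^ 2) ^ 2 = 9 + 4 * ν ^ 2 := sq_sqrt (by positivity)
  have hthree : (√3 / 2) ^ 2 = 3 / 4 := by norm_num [div_pow]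
  have hne : ν ^ 2 - 3 / 4 ≠ 0 := by
    rw [← hthree]
    exact sub_ne_zero.mpr fun h' ↦ h ((sq_eq_sq₀ h0 (by positivity)).mp h')
  have hfactor : (√(9 + 4 * ν ^ 2) - 4 * ν) * (√(9 + 4 * ν ^ 2) + 4 * ν) =
      -12 * (ν ^ 2 - 3 / 4) := by
    linear_combination hsq
  have hsub : √(9 + 4 * ν ^ 2) - 4 * ν ≠ 0 :=
    left_ne_zero_of_mul (hfactor.trans_ne (mul_ne_zero (by norm_num) hne))
  rw [eta, if_neg h, inv_div, chordSlope, w_sqrt_three_div_two, hthree, div_div, mul_div_assoc',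
    div_eq_div_iff hsub (mul_ne_zero hne two_ne_zero)]
  linear_combination (1 / 2 - w ν) * hfactor

theorem eta_pos (h0 : 0 ≤ ν) (h1 : ν ≤ 1) (h : ν ≠ √3 / 2) : 0 < eta ν := by
  have hslope := chordSlope_pos h0 h1 h
  rw [← inv_pos, inv_eta h0 h]
  positivity

theorem eta_le_div (h0 : 0 ≤ ν) (h1 : ν ≤ 1) (h : ν ≠ √3 / 2) :
    eta ν ≤ (3 + ν ^ 2) / (√(9 + 4 * ν ^ 2) + 4 * ν) := by
  rw [← inv_le_inv₀ (by positivity) (eta_pos h0 h1 h), inv_eta h0 h, inv_div, div_eq_mul_one_div]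
  refine mul_le_mul_of_nonneg_left ?_ (by positivity)
  linarith [two_div_three_add_sq_le_chordSlope h0 h1 h, div_eq_mul_one_div 2 (3 + ν ^ 2)]

theorem eta_le_one_sub (h0 : 0 ≤ ν) (h1 : ν ≤ 1) (h : ν ≠ √3 / 2) :
    eta ν ≤ 1 - 7 / 15 * ν := by
  refine (eta_le_div h0 h1 h).trans ((div_le_iff₀ (by positivity)).mpr ?_)
  calc 3 + ν ^ 2
      ≤ (1 - 7 / 15 * ν) * (3 + 0.6 * ν ^ 2 + 4 * ν) := by
        have : 0 ≤ ν * (1 - ν) := by nlinarith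
        nlinarith
    _ ≤ (1 - 7 / 15 * ν) * (√(9 + 4 * ν ^ 2) + 4 * ν) := by
        gcongr
        · linarith
        · exact three_add_sq_le_sqrt (by nlinarith)

theorem le_sqrt_mul_one_sub_eta_sq (h0 : 0 ≤ ν) (h1 : ν ≤ 1) (h : ν ≠ √3 / 2) :
    2.53 * ν ≤ √(9 + 4 * ν ^ 2) * (1 - eta ν ^ 2) := by
  have hη0 := eta_pos h0 h1 h
  have hη := eta_le_one_sub h0 h1 h
  calc 2.53 * ν
      ≤ (3 + 0.6 * ν ^ 2) * (1 - (1 - 7 / 15 * ν) ^ 2) := by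
        nlinarith [mul_nonneg h0 (sq_nonneg (ν - 3 / 4)),
          mul_nonneg (pow_nonneg h0 3) (sub_nonneg.mpr h1)]
    _ ≤ √(9 + 4 * ν ^ 2) * (1 - eta ν ^ 2) := by
        gcongr
        · nlinarith
        · exact three_add_sq_le_sqrt (by nlinarith)

end Eta

section CTwo

variable {ν : ℝ}

-- The square of `3π(4 - π) / (2(π - 2))` cancels, and `π(4 - π) = 4 - (π - 2)²`.
theorem c2_add_eq (h0 : 0 ≤ ν) (h1 : ν ≤ 1) (h : ν ≠ √3 / 2) :
    c2 ν + 3136 * ν ^ 2 = 16 * ν * √(9 + 4 * ν ^ 2) *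
      (8 * (5 + 2 * ν ^ 2) - 4 / 9 * (√(9 + 4 * ν ^ 2) - 4 * ν) ^ 2
        - 3 * eta ν * ((4 - (π - 2) ^ 2) * (√(9 + 4 * ν ^ 2) - 4 * ν)
          + (π - 2) ^ 2 * (3 * eta ν))) := by
  have hw := one_sub_two_mul_w_ne_zero h0 h1 h
  have hπ : π - 2 ≠ 0 := by linarith [pi_gt_three]
  rw [c2, eta, if_neg h]
  field_simp
  ring

theorem eta_mul_le (h0 : 0 ≤ ν) (h1 : ν ≤ 1) (h : ν ≠ √3 / 2) :
    3 * eta ν * ((4 - (π - 2) ^ 2) * (√(9 + 4 * ν ^ 2) - 4 * ν) + (π - 2) ^ 2 * (3 * eta ν)) ≤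
      (3 - 1.4 * ν) * (12 - 10.95 * ν) := by
  have hη0 := eta_pos h0 h1 h
  have hη := eta_le_one_sub h0 h1 h
  have hr := sqrt_le_three_add h0 h1
  have hπ : (π - 2) ^ 2 ≤ 1.31 := by nlinarith [pi_gt_three, pi_lt_d4]
  have hfactor :=
    calc (4 - (π - 2) ^ 2) * (√(9 + 4 * ν ^ 2) - 4 * ν) + (π - 2) ^ 2 * (3 * eta ν)
        ≤ (4 - (π - 2) ^ 2) * (3 - 3.39 * ν) + (π - 2) ^ 2 * (3 - 1.4 * ν) := by
          gcongr (4 - (π - 2) ^ 2) * ?_ + (π - 2) ^ 2 * ?_ <;> linarith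
      _ = 12 - 13.56 * ν + 1.99 * ((π - 2) ^ 2 * ν) := by ring
      _ ≤ 12 - 10.95 * ν := by linarith [mul_le_mul_of_nonneg_right hπ h0]
  calc _ ≤ 3 * eta ν * (12 - 10.95 * ν) := mul_le_mul_of_nonneg_left hfactor (by positivity)
    _ ≤ (3 - 1.4 * ν) * (12 - 10.95 * ν) :=
      mul_le_mul_of_nonneg_right (by linarith) (by linarith)

theorem le_c2_add (h0 : 0 ≤ ν) (h1 : ν ≤ 1) (h : ν ≠ √3 / 2) :
    16 * ν * √(9 + 4 * ν ^ 2) * (54.2 * ν) ≤ c2 ν + 3136 * ν ^ 2 := by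
  rw [c2_add_eq h0 h1 h]
  have hsub_sq : (√(9 + 4 * ν ^ 2) - 4 * ν) ^ 2 ≤
      9 + 20 * ν ^ 2 - 8 * (ν * (3 + 0.6 * ν ^ 2)) := by
    have hsq : √(9 + 4 * ν ^ 2) ^ 2 = 9 + 4 * ν ^ 2 := sq_sqrt (by positivity)
    linarith [mul_le_mul_of_nonneg_left (three_add_sq_le_sqrt (by nlinarith : ν ^ 2 ≤ 1)) h0]
  have hpoly : 54.2 * ν ≤ 8 * (5 + 2 * ν ^ 2)
      - 4 / 9 * (9 + 20 * ν ^ 2 - 8 * (ν * (3 + 0.6 * ν ^ 2)))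
      - (3 - 1.4 * ν) * (12 - 10.95 * ν) := by
    have hcubic : 0 ≤ ν * ((1 - ν) * (2.855 - ν)) :=
      mul_nonneg h0 (mul_nonneg (by linarith) (by linarith))
    linarith [sq_nonneg ν]
  gcongr
  linarith [eta_mul_le h0 h1 h]

theorem sq_le_c2_add_sq_div (h0 : 0 < ν) (h1 : ν ≤ 1) (h : ν ≠ √3 / 2) :
    (54.2 * ν) ^ 2 ≤ (c2 ν + 3136 * ν ^ 2) ^ 2 / (256 * ν ^ 2 * (9 + 4 * ν ^ 2)) := by
  have hsq : √(9 + 4 * ν ^ 2) ^ 2 = 9 + 4 * ν ^ 2 := sq_sqrt (by positivity)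
  rw [le_div_iff₀ (by positivity)]
  calc (54.2 * ν) ^ 2 * (256 * ν ^ 2 * (9 + 4 * ν ^ 2))
      = (16 * ν * √(9 + 4 * ν ^ 2) * (54.2 * ν)) ^ 2 := by
        linear_combination (-(54.2 * ν) ^ 2 * 256 * ν ^ 2) * hsq
    _ ≤ (c2 ν + 3136 * ν ^ 2) ^ 2 := by
      gcongr
      exact le_c2_add h0.le h1 h

end CTwo

/-- For every ν ∈ (0,1] ∖ {√3/2} one has c₄(ν) ≥ 0. -/
theorem c4_nonneg (ν : ℝ) (hν : ν ∈ Set.Ioc (0 : ℝ) 1) (h : ν ≠ Real.sqrt 3 / 2) :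
    0 ≤ c4 ν := by
  obtain ⟨h0, h1⟩ := hν
  have hc2 := sq_le_c2_add_sq_div h0 h1 h
  have hη := mul_le_mul_of_nonneg_left (le_sqrt_mul_one_sub_eta_sq h0.le h1 h) h0.le
  rw [c4]
  linarith [sq_nonneg ν]
end

section
/- For every ν ∈ (0,1] ∖ {√3/2} one has c₆(ν) ≥ 0. -/
/-- c₆(ν) := 2(c₂(ν)+3136ν²)(1−η_ν²)/(ν√(9+4ν²)) − 1024ν². -/
noncomputable def c6 (ν : ℝ) : ℝ :=
  2 * (c2 ν + 3136 * ν ^ 2) * (1 - eta ν ^ 2) / (ν * Real.sqrt (9 + 4 * ν ^ 2))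
    - 1024 * ν ^ 2

/-!
Write `s = √(9 + 4ν²)` and `η = η_ν`. The theorem is the product of two lower bounds,
`c₂(ν) + 3136ν² ≥ 768ν²s` and `1 - η² ≥ 2ν/3`, since `2 · 768 · 2/3 = 1024`. Both follow from
`0 ≤ η ≤ 1 - 3ν/7`; for the first one, `c₂` is rewritten as a quadratic polynomial in `η`.

As `η (s + 4ν) = (3 - 4ν²) / (1 - 2w_ν)`, the bound on `η` is the estimate
`(1 - 2w_ν) / (3 - 4ν²) ≥ 1 / (3 + ν²)`. With `q = (1 - ν²) / 4` it compares two slopes through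
`q = 1/16` (that is `ν = √3/2`, the common zero of numerator and denominator) of the function
`(1 - q) (1 - 4√q cot (π√q))`. That function is concave because the factor `1 - q` cancels the first
pole of the Mittag-Leffler series of the cotangent and makes every other term concave.
-/

open Real Set

lemma concaveOn_of_hasSum {ι 𝕜 E β : Type*} [Semiring 𝕜] [PartialOrder 𝕜]
    [AddCommMonoid E] [SMul 𝕜 E] [AddCommMonoid β] [PartialOrder β] [IsOrderedAddMonoid β]
    [TopologicalSpace β] [OrderClosedTopology β] [ContinuousAdd β] [DistribSMul 𝕜 β]
    [ContinuousConstSMul 𝕜 β] {s : Set E} {f : ι → E → β} {g : E → β} (hs : Convex 𝕜 s)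
    (hf : ∀ i, ConcaveOn 𝕜 s (f i)) (hg : ∀ x ∈ s, HasSum (fun i ↦ f i x) (g x)) :
    ConcaveOn 𝕜 s g :=
  ⟨hs, fun x hx y hy a b ha hb hab ↦
    hasSum_le (fun i ↦ (hf i).2 hx hy ha hb hab)
      (((hg x hx).const_smul a).add ((hg y hy).const_smul b)) (hg _ (hs hx hy ha hb hab))⟩

lemma convexOn_inv_const_sub {𝕜 : Type*} [Field 𝕜] [LinearOrder 𝕜] [IsStrictOrderedRing 𝕜] (c : 𝕜) :
    ConvexOn 𝕜 (Iio c) fun x ↦ (c - x)⁻¹ := by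
  have h := (convexOn_zpow (𝕜 := 𝕜) (-1)).comp_affineMap (AffineMap.const 𝕜 𝕜 c - AffineMap.id 𝕜 𝕜)
  refine (h.subset (fun x hx ↦ ?_) (convex_Iio c)).congr fun x _ ↦ ?_
  · simpa using hx
  · simp

lemma concaveOn_one_sub_mul_two_mul_div_sub {c : ℝ} (hc : 1 ≤ c) :
    ConcaveOn ℝ (Iio 1) fun q ↦ (1 - q) * (2 * q / (c - q)) := by
  have hinv : ConvexOn ℝ (Iio 1) fun q ↦ 2 * c * (c - 1) * (c - q)⁻¹ :=
    ((convexOn_inv_const_sub c).subset (Iio_subset_Iio hc) (convex_Iio 1)).smul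
      (mul_nonneg (by linarith) (by linarith))
  have haffine : ConcaveOn ℝ (Iio 1) fun q : ℝ ↦ 2 * q + 2 * (c - 1) :=
    ((concaveOn_id (convex_Iio 1)).smul zero_le_two).add_const _
  refine (haffine.sub hinv).congr fun q hq ↦ ?_
  have : c - q ≠ 0 := (sub_pos.2 ((mem_Iio.1 hq).trans_le hc)).ne'
  simp only [Pi.sub_apply]
  field_simp
  ring

lemma hasSum_one_sub_pi_mul_complex_cot {x : ℂ} (hx : x ∈ Complex.integerComplement) :
    HasSum (fun n : ℕ ↦ 2 * x ^ 2 / (((n : ℂ) + 1) ^ 2 - x ^ 2))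
      (1 - π * x * Complex.cot (π * x)) := by
  have hx0 := Complex.integerComplement.ne_zero hx
  have hterm (n : ℕ) : 2 * x ^ 2 / (((n : ℂ) + 1) ^ 2 - x ^ 2) = -x * cotTerm x n := by
    rw [cotTerm_identity hx,
      show ((n : ℂ) + 1) ^ 2 - x ^ 2 = -((x + (n + 1)) * (x - (n + 1))) by ring, div_neg]
    ring
  have hsum : 1 - π * x * Complex.cot (π * x) = -x * ∑' n, cotTerm x n := by
    rw [← cot_series_rep' hx]
    field_simp
    ring
  simp only [hterm, hsum]
  exact (summable_cotTerm hx).hasSum.mul_left (-x)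

lemma hasSum_one_sub_pi_mul_real_cot {x : ℝ} (hx : x ∉ range ((↑) : ℤ → ℝ)) :
    HasSum (fun n : ℕ ↦ 2 * x ^ 2 / (((n : ℝ) + 1) ^ 2 - x ^ 2)) (1 - π * x * cot (π * x)) := by
  have hx' : (x : ℂ) ∈ Complex.integerComplement := by
    rw [Complex.mem_integerComplement_iff]
    rintro ⟨n, hn⟩
    exact hx ⟨n, by exact_mod_cast hn⟩
  rw [← Complex.hasSum_ofReal]
  push_cast
  exact hasSum_one_sub_pi_mul_complex_cot hx'

lemma sqrt_notMem_range_intCast {q : ℝ} (hq : q ∈ Ioo 0 1) : √q ∉ range ((↑) : ℤ → ℝ) := by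
  rintro ⟨n, hn⟩
  have h0 : (0 : ℝ) < n := hn ▸ sqrt_pos.2 hq.1
  have h1 : (n : ℝ) < 1 := hn ▸ (sqrt_lt' one_pos).2 (by simpa using hq.2)
  norm_cast at h0 h1
  lia

lemma concaveOn_one_sub_mul_one_sub_pi_mul_sqrt_mul_cot :
    ConcaveOn ℝ (Ioo 0 1) fun q ↦ (1 - q) * (1 - π * √q * cot (π * √q)) := by
  refine concaveOn_of_hasSum
    (f := fun (n : ℕ) q ↦ (1 - q) * (2 * q / (((n : ℝ) + 1) ^ 2 - q))) (convex_Ioo 0 1)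
    (fun n ↦ ?_) fun q hq ↦ ?_
  · have hn : 1 ≤ ((n : ℝ) + 1) ^ 2 := one_le_pow₀ (by simp)
    exact (concaveOn_one_sub_mul_two_mul_div_sub hn).subset Ioo_subset_Iio_self (convex_Ioo 0 1)
  · simpa [sq_sqrt hq.1.le] using
      (hasSum_one_sub_pi_mul_real_cot (sqrt_notMem_range_intCast hq)).mul_left (1 - q)

lemma concaveOn_one_sub_mul_one_sub_mul_sqrt_mul_cot {a : ℝ} (ha : 0 ≤ a) :
    ConcaveOn ℝ (Ioo 0 1) fun q ↦ (1 - q) * (1 - a * √q * cot (π * √q)) := by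
  have haffine : ConcaveOn ℝ (Ioo 0 1) fun q ↦ (1 - a / π) * (1 - q) := by
    refine ⟨convex_Ioo 0 1, fun x _ y _ b c _ _ hbc ↦ le_of_eq ?_⟩
    simp only [smul_eq_mul]
    linear_combination (1 - a / π) * hbc
  refine ((concaveOn_one_sub_mul_one_sub_pi_mul_sqrt_mul_cot.smul
    (div_nonneg ha pi_pos.le)).add haffine).congr fun q _ ↦ ?_
  simp only [Pi.add_apply, smul_eq_mul]
  field_simp
  ring

lemma four_le_one_sub_sq_mul_one_sub_four_mul_cot_div {x : ℝ} (hx : x ∈ Ioc 0 (1 / 2))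
    (hx' : x ≠ 1 / 4) : 4 ≤ (1 - x ^ 2) * (1 - 4 * x * cot (π * x)) / (x ^ 2 - 1 / 16) := by
  obtain ⟨hx0, hx2⟩ := hx
  set G : ℝ → ℝ := fun q ↦ (1 - q) * (1 - 4 * √q * cot (π * √q)) with hG
  have hG_sq {y : ℝ} (hy : 0 ≤ y) : G (y ^ 2) = (1 - y ^ 2) * (1 - 4 * y * cot (π * y)) := by
    simp only [hG, sqrt_sq hy]
  have hG_quarter : G ((1 / 4) ^ 2) = 0 := by
    rw [hG_sq (by norm_num), mul_one_div π, cot_eq_cos_div_sin, cos_pi_div_four, sin_pi_div_four,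
      div_self (by positivity)]
    norm_num
  have hG_half : G ((1 / 2) ^ 2) = 3 / 4 := by
    rw [hG_sq (by norm_num), mul_one_div π, cot_eq_cos_div_sin, cos_pi_div_two]
    norm_num
  have hx_ne : x ^ 2 ≠ (1 / 4) ^ 2 := by
    rwa [Ne, pow_left_inj₀ hx0.le (by norm_num) two_ne_zero]
  have hslope := (concaveOn_one_sub_mul_one_sub_mul_sqrt_mul_cot (a := 4) (by norm_num)).slope_anti
    (x := (1 / 4) ^ 2) (by norm_num) ⟨⟨by positivity, by nlinarith⟩, hx_ne⟩
    (b := (1 / 2) ^ 2) (by norm_num) (by gcongr)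
  rw [← hG, slope_def_field, slope_def_field, hG_quarter, hG_half, hG_sq hx0.le] at hslope
  norm_num at hslope ⊢
  exact hslope

lemma three_sub_four_mul_sq_ne_zero {ν : ℝ} (hν : 0 ≤ ν) (h : ν ≠ √3 / 2) :
    3 - 4 * ν ^ 2 ≠ 0 := by
  contrapose! h
  rw [show (3 : ℝ) = (2 * ν) ^ 2 by linarith, sqrt_sq (by positivity)]
  ring

lemma inv_three_add_sq_le_one_sub_two_mul_w_div {ν : ℝ} (hν : ν ∈ Icc 0 1) (h : ν ≠ √3 / 2) :
    (3 + ν ^ 2)⁻¹ ≤ (1 - 2 * w ν) / (3 - 4 * ν ^ 2) := by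
  obtain ⟨hν0, hν1⟩ := hν
  have hden := three_sub_four_mul_sq_ne_zero hν0 h
  obtain rfl | hlt := hν1.eq_or_lt
  · have hpi : 2 / π ≥ 5 / 8 := by
      rw [ge_iff_le, div_le_div_iff₀ (by norm_num) pi_pos]
      linarith [pi_lt_d2]
    norm_num [w]
    linarith
  · have hpos : 0 < 1 - ν ^ 2 := by nlinarith
    have hsq : Ups ν ^ 2 = 1 - ν ^ 2 := sq_sqrt hpos.le
    have hUps : 0 < Ups ν := sqrt_pos.2 hpos
    have hslope := four_le_one_sub_sq_mul_one_sub_four_mul_cot_div (x := Ups ν / 2)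
      ⟨by positivity, by nlinarith⟩ fun hx ↦ hden (by nlinarith)
    have hw : 4 * (Ups ν / 2) * cot (π * (Ups ν / 2)) = 2 * w ν := by
      rw [w, if_neg hlt.ne, mul_div_assoc]
      ring
    rw [hw, div_pow, hsq, show 1 - (1 - ν ^ 2) / 2 ^ 2 = (3 + ν ^ 2) / 4 by ring,
      show (1 - ν ^ 2) / 2 ^ 2 - 1 / 16 = (3 - 4 * ν ^ 2) / 16 by ring] at hslope
    rw [inv_le_iff_one_le_mul₀' (by positivity)]
    calc (1 : ℝ) ≤ (3 + ν ^ 2) / 4 * (1 - 2 * w ν) / ((3 - 4 * ν ^ 2) / 16) / 4 := by linarith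
      _ = (3 + ν ^ 2) * ((1 - 2 * w ν) / (3 - 4 * ν ^ 2)) := by
        field_simp
        ring

lemma sq_sqrt_nine_add (ν : ℝ) : √(9 + 4 * ν ^ 2) ^ 2 = 9 + 4 * ν ^ 2 :=
  sq_sqrt (by positivity)

lemma three_le_sqrt_nine_add (ν : ℝ) : 3 ≤ √(9 + 4 * ν ^ 2) :=
  le_sqrt_of_sq_le (by nlinarith)

lemma sqrt_nine_add_le {ν : ℝ} (hν : ν ∈ Icc 0 2) : √(9 + 4 * ν ^ 2) ≤ 3 + ν :=
  sqrt_le_iff.2 ⟨by linarith [hν.1], by nlinarith [mul_nonneg hν.1 (sub_nonneg.2 hν.2)]⟩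

lemma eta_mul_sqrt_add {ν : ℝ} (h : ν ≠ √3 / 2) :
    eta ν * (√(9 + 4 * ν ^ 2) + 4 * ν) = (3 - 4 * ν ^ 2) / (1 - 2 * w ν) := by
  have hprod : (√(9 + 4 * ν ^ 2) - 4 * ν) * (√(9 + 4 * ν ^ 2) + 4 * ν) = 3 * (3 - 4 * ν ^ 2) := by
    linear_combination sq_sqrt_nine_add ν
  rw [eta, if_neg h, div_mul_eq_mul_div, hprod, mul_div_mul_left _ _ three_ne_zero]

lemma eta_mem_Icc {ν : ℝ} (hν : ν ∈ Icc 0 1) (h : ν ≠ √3 / 2) :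
    eta ν ∈ Icc 0 (1 - 3 / 7 * ν) := by
  obtain ⟨hν0, hν1⟩ := hν
  have hs := three_le_sqrt_nine_add ν
  have hw := inv_three_add_sq_le_one_sub_two_mul_w_div ⟨hν0, hν1⟩ h
  have hinv : 0 < (3 + ν ^ 2)⁻¹ := by positivity
  have hmul : eta ν * (√(9 + 4 * ν ^ 2) + 4 * ν) = ((1 - 2 * w ν) / (3 - 4 * ν ^ 2))⁻¹ := by
    rw [eta_mul_sqrt_add h, inv_div]
  have heta0 : 0 ≤ eta ν := by
    refine nonneg_of_mul_nonneg_left ?_ (by linarith : 0 < √(9 + 4 * ν ^ 2) + 4 * ν)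
    exact hmul ▸ inv_nonneg.2 (hinv.le.trans hw)
  refine ⟨heta0, le_of_mul_le_mul_right ?_ (by linarith : 0 < 3 + 4 * ν)⟩
  calc eta ν * (3 + 4 * ν) ≤ eta ν * (√(9 + 4 * ν ^ 2) + 4 * ν) := by gcongr
    _ ≤ 3 + ν ^ 2 := hmul ▸ inv_le_of_inv_le₀ (by positivity) hw
    _ ≤ (1 - 3 / 7 * ν) * (3 + 4 * ν) := by nlinarith

lemma two_thirds_mul_le_one_sub_eta_sq {ν : ℝ} (hν : ν ∈ Icc 0 1) (h : ν ≠ √3 / 2) :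
    2 / 3 * ν ≤ 1 - eta ν ^ 2 := by
  obtain ⟨heta0, heta1⟩ := eta_mem_Icc hν h
  calc 2 / 3 * ν ≤ 1 - (1 - 3 / 7 * ν) ^ 2 := by nlinarith [hν.1, hν.2]
    _ ≤ 1 - eta ν ^ 2 := by gcongr

lemma sq_mul_sub_sq_eq_of_mul_eq {p d k e : ℝ} (hp : p ≠ 2) (h : d * k = 3 * e) :
    d ^ 2 * (-4 + 9 * p ^ 2 * (p - 4) ^ 2 / (4 * (p - 2) ^ 2)
        - (3 * p * (4 - p) / (2 * (p - 2)) + 3 * (p - 2) * k) ^ 2) =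
      -4 * d ^ 2 - 27 * (4 - (p - 2) ^ 2) * d * e - 81 * (p - 2) ^ 2 * e ^ 2 := by
  have hp' : p - 2 ≠ 0 := sub_ne_zero.2 hp
  -- The square of `3 * p * (4 - p) / (2 * (p - 2))` cancels the positive fraction.
  calc _ = -4 * d ^ 2 - 9 * (4 - (p - 2) ^ 2) * d * (d * k) - 9 * (p - 2) ^ 2 * (d * k) ^ 2 := by
        field_simp
        ring
    _ = _ := by
        rw [h]
        ring

/-- The factor `(c₂(ν) + 3136ν²) / (16νs/9)` as a quadratic polynomial in `e = η_ν`, where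
`s = √(9 + 4ν²)` and `m = (π - 2)²`; these are kept as variables because only bounds on them are
needed to estimate it. -/
def etaQuadratic (ν s m e : ℝ) : ℝ :=
  324 + 64 * ν ^ 2 + 32 * ν * s - 27 * (4 - m) * (s - 4 * ν) * e - 81 * m * e ^ 2

lemma c2_add_eq_mul_etaQuadratic {ν : ℝ} (h : ν ≠ √3 / 2) :
    c2 ν + 3136 * ν ^ 2 = 16 / 9 * ν * √(9 + 4 * ν ^ 2) *
      etaQuadratic ν √(9 + 4 * ν ^ 2) ((π - 2) ^ 2) (eta ν) := by
  have hpi : π ≠ 2 := by linarith [pi_gt_three]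
  have heta : (√(9 + 4 * ν ^ 2) - 4 * ν) * (1 - 2 * w ν)⁻¹ = 3 * eta ν := by
    rw [eta, if_neg h, div_eq_mul_inv, mul_inv]
    ring
  have hsq : (√(9 + 4 * ν ^ 2) - 4 * ν) ^ 2 = 9 + 20 * ν ^ 2 - 8 * ν * √(9 + 4 * ν ^ 2) := by
    linear_combination sq_sqrt_nine_add ν
  rw [c2, etaQuadratic, div_eq_mul_inv (3 * (π - 2)), sq_mul_sub_sq_eq_of_mul_eq hpi heta, hsq]
  field_simp
  ring

lemma pi_sub_two_sq_le : (π - 2) ^ 2 ≤ 4 / 3 := by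
  nlinarith [pi_gt_three, pi_lt_d2]

lemma mul_le_etaQuadratic {ν s m e : ℝ} (hν : ν ∈ Icc 0 1) (hs : s ∈ Icc 3 (3 + ν))
    (hm : m ∈ Icc 0 (4 / 3)) (he : e ∈ Icc 0 (1 - 3 / 7 * ν)) :
    432 * ν ≤ etaQuadratic ν s m e := by
  obtain ⟨hν0, hν1⟩ := hν
  obtain ⟨hs3, hsν⟩ := hs
  obtain ⟨hm0, hm1⟩ := hm
  obtain ⟨he0, he1⟩ := he
  set V := 1 - 3 / 7 * ν with hV
  -- `s - 4ν` may be negative, but its upper bound `3(1 - ν)` is not.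
  have hsV : (s - 4 * ν) * e ≤ 3 * (1 - ν) * V :=
    mul_le_mul (by linarith) he1 he0 (by linarith)
  have hmV : m * V ≤ 4 / 3 * V := mul_le_mul_of_nonneg_right hm1 (by linarith)
  have hm4 : 0 ≤ 4 - m := by linarith
  calc 432 * ν ≤ (96 + 64 * ν + 324 / 7 * (10 - 3 * ν) - 324 / 7 * (4 / 3 * V)) * ν := by
        rw [hV]
        nlinarith
    _ ≤ (96 + 64 * ν + 324 / 7 * (10 - 3 * ν) - 324 / 7 * (m * V)) * ν := by gcongr
    _ = 324 + 64 * ν ^ 2 + 32 * ν * 3 - 27 * ((4 - m) * (3 * (1 - ν) * V)) - 81 * (m * V ^ 2) := by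
        rw [hV]
        ring
    _ ≤ 324 + 64 * ν ^ 2 + 32 * ν * s - 27 * ((4 - m) * ((s - 4 * ν) * e)) - 81 * (m * e ^ 2) := by
        gcongr
    _ = etaQuadratic ν s m e := by
        rw [etaQuadratic]
        ring

lemma mul_sqrt_le_c2_add {ν : ℝ} (hν : ν ∈ Icc 0 1) (h : ν ≠ √3 / 2) :
    768 * ν ^ 2 * √(9 + 4 * ν ^ 2) ≤ c2 ν + 3136 * ν ^ 2 := by
  have hs : √(9 + 4 * ν ^ 2) ∈ Icc 3 (3 + ν) :=
    ⟨three_le_sqrt_nine_add ν, sqrt_nine_add_le ⟨hν.1, by linarith [hν.2]⟩⟩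
  have hbound := mul_le_etaQuadratic hν hs ⟨sq_nonneg _, pi_sub_two_sq_le⟩ (eta_mem_Icc hν h)
  have hν0 := hν.1
  calc 768 * ν ^ 2 * √(9 + 4 * ν ^ 2) = 16 / 9 * ν * √(9 + 4 * ν ^ 2) * (432 * ν) := by ring
    _ ≤ _ := by gcongr
    _ = c2 ν + 3136 * ν ^ 2 := (c2_add_eq_mul_etaQuadratic h).symm

/-- For every ν ∈ (0,1] ∖ {√3/2} one has c₆(ν) ≥ 0. -/
theorem c6_nonneg (ν : ℝ) (hν : ν ∈ Set.Ioc (0 : ℝ) 1) (h : ν ≠ Real.sqrt 3 / 2) :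
    0 ≤ c6 ν := by
  have hν' : ν ∈ Icc 0 1 := Ioc_subset_Icc_self hν
  have hν0 : 0 < ν := hν.1
  have hc2 := mul_sqrt_le_c2_add hν' h
  have hc2_nonneg : 0 ≤ c2 ν + 3136 * ν ^ 2 := le_trans (by positivity) hc2
  have heta := two_thirds_mul_le_one_sub_eta_sq hν' h
  rw [c6, sub_nonneg, le_div_iff₀ (by positivity)]
  calc 1024 * ν ^ 2 * (ν * √(9 + 4 * ν ^ 2))
      = 2 * (768 * ν ^ 2 * √(9 + 4 * ν ^ 2)) * (2 / 3 * ν) := by ring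
    _ ≤ 2 * (c2 ν + 3136 * ν ^ 2) * (1 - eta ν ^ 2) :=
        mul_le_mul (by gcongr) heta (by positivity) (by linarith)
end

section
/- For every n ∈ ℕ with n ≥ 1 and every ν ∈ [0,1] one has F_{2n}(ν) ≤ w_ν ≤ F_{2n−1}(ν). -/
/-- F_n(ν) := ∑_{k=1}^n (−1)^{k+1} (∑_{j=1}^∞ 16j²/(π(4j²−1)^{k+1})) ν^{2k}. -/
noncomputable def F (n : ℕ) (ν : ℝ) : ℝ :=
  ∑ k ∈ Finset.Icc 1 n,
    (-1 : ℝ) ^ (k + 1)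
      * (∑' j : ℕ, 16 * ((j : ℝ) + 1) ^ 2 / (Real.pi * (4 * ((j : ℝ) + 1) ^ 2 - 1) ^ (k + 1)))
      * ν ^ (2 * k)

/-!
By the partial fraction expansion of the cotangent,
`y * cot (π * y / 2) = 2 / π - (4 / π) * ∑ j, y ^ 2 / (4 * (j + 1) ^ 2 - y ^ 2)`, and at `y = 1`
the left-hand side vanishes. Subtracting this case to absorb the constant `2 / π` and putting
`y ^ 2 = 1 - ν ^ 2` writes `w ν` as a series of nonnegative terms. With
`a j = 4 * (j + 1) ^ 2 - 1`, the `j`-th term contains the factor `1 / (a j + ν ^ 2)`, and `F n ν`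
arises by expanding this factor as a geometric series in `-(ν ^ 2 / a j)` and stopping after `n`
terms. Hence `w ν - F n ν` is the same series with its `j`-th term multiplied by
`(-(ν ^ 2 / a j)) ^ n`, which is nonnegative for even `n` and nonpositive for odd `n`.
-/

open scoped Real

/-- The denominators `(2 (j + 1)) ^ 2 - 1 = 3, 15, 35, …` of the coefficients of `F`; the index is
shifted so that it starts at `0`. -/
noncomputable def coeffDenom (j : ℕ) : ℝ := 4 * ((j : ℝ) + 1) ^ 2 - 1

/-- The summands of the partial fraction expansion of `w ν`, arranged so that each of them is
nonnegative. -/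
noncomputable def wTerm (ν : ℝ) (j : ℕ) : ℝ :=
  16 * ((j : ℝ) + 1) ^ 2 * ν ^ 2 / (π * coeffDenom j * (coeffDenom j + ν ^ 2))

theorem one_le_coeffDenom (j : ℕ) : 1 ≤ coeffDenom j := by
  unfold coeffDenom
  nlinarith [(Nat.cast_nonneg j : (0 : ℝ) ≤ j)]

theorem coeffDenom_pos (j : ℕ) : 0 < coeffDenom j := one_pos.trans_le (one_le_coeffDenom j)

theorem sixteen_mul_sq_eq_four_mul_coeffDenom_add_one (j : ℕ) :
    16 * ((j : ℝ) + 1) ^ 2 = 4 * (coeffDenom j + 1) := by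
  rw [coeffDenom]
  ring

theorem wTerm_nonneg (ν : ℝ) (j : ℕ) : 0 ≤ wTerm ν j := by
  have ha := coeffDenom_pos j
  unfold wTerm
  positivity

theorem summable_pow_of_nonneg_of_le_one {ι : Type*} {f : ι → ℝ} (hf : Summable f)
    (h0 : ∀ i, 0 ≤ f i) (h1 : ∀ i, f i ≤ 1) {k : ℕ} (hk : k ≠ 0) :
    Summable fun i ↦ f i ^ k :=
  hf.of_nonneg_of_le (fun i ↦ pow_nonneg (h0 i) k) fun i ↦ pow_le_of_le_one (h0 i) (h1 i) hk

theorem sum_Icc_neg_one_pow_mul_div_pow_mul_pow {K : Type*} [Field K] {a x : K} (ha : a ≠ 0)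
    (hax : a + x ≠ 0) (c : K) (n : ℕ) :
    ∑ k ∈ Finset.Icc 1 n, (-1) ^ (k + 1) * (c / a ^ (k + 1)) * x ^ k
      = c * x / (a * (a + x)) * (1 - (-(x / a)) ^ n) := by
  induction n with
  | zero => simp
  | succ n ih =>
    rw [Finset.sum_Icc_succ_top (by omega), ih]
    simp only [neg_pow (x / a), div_pow, pow_succ]
    field_simp
    ring

theorem hasSum_pi_mul_cot_pi_mul_sub_one_div {x : ℝ} (hx : ∀ n : ℤ, x ≠ n) :
    HasSum (fun j : ℕ ↦ 1 / (x - (j + 1)) + 1 / (x + (j + 1)))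
      (π * Real.cot (π * x) - 1 / x) := by
  have hx' : (x : ℂ) ∈ Complex.integerComplement := fun ⟨n, hn⟩ ↦ hx n (by exact_mod_cast hn.symm)
  have hsum := (summable_cotTerm hx').hasSum
  unfold cotTerm at hsum
  rw [← cot_series_rep' hx'] at hsum
  rw [← Complex.hasSum_ofReal]
  push_cast [Complex.ofReal_cot]
  exact hsum

theorem hasSum_sq_div_four_mul_sq_sub_sq {y : ℝ} (hy : ∀ n : ℤ, y ≠ 2 * n) :
    HasSum (fun j : ℕ ↦ y ^ 2 / (4 * ((j : ℝ) + 1) ^ 2 - y ^ 2))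
      (1 / 2 - π / 4 * (y * Real.cot (π * y / 2))) := by
  have hcot := hasSum_pi_mul_cot_pi_mul_sub_one_div (x := y / 2) fun n hn ↦ hy n (by linarith)
  have hvalue : 1 / 2 - π / 4 * (y * Real.cot (π * y / 2))
      = -(y / 4) * (π * Real.cot (π * (y / 2)) - 1 / (y / 2)) := by
    have hy0 : y ≠ 0 := by simpa using hy 0
    rw [mul_div_assoc]
    field_simp
    ring
  rw [hvalue]
  refine (hcot.mul_left (-(y / 4))).congr_fun fun j ↦ ?_
  have hsub : y / 2 - (j + 1) ≠ 0 := fun h ↦ hy (j + 1) (by push_cast; linarith)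
  have hadd : y / 2 + (j + 1) ≠ 0 := fun h ↦ hy (-(j + 1)) (by push_cast; linarith)
  have hfactor : 4 * ((j : ℝ) + 1) ^ 2 - y ^ 2
      = -4 * ((y / 2 - (j + 1)) * (y / 2 + (j + 1))) := by ring
  rw [hfactor, one_div_add_one_div hsub hadd]
  field_simp
  ring

theorem ne_two_mul_intCast_of_pos_of_lt_two {y : ℝ} (h0 : 0 < y) (h2 : y < 2) (n : ℤ) :
    y ≠ 2 * n := by
  rintro rfl
  have hpos : 0 < n := by exact_mod_cast (by linarith : (0 : ℝ) < n)
  have hlt : n < 1 := by exact_mod_cast (by linarith : (n : ℝ) < 1)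
  omega

theorem hasSum_one_div_coeffDenom : HasSum (fun j ↦ 1 / coeffDenom j) (1 / 2) := by
  have h := hasSum_sq_div_four_mul_sq_sub_sq
    (ne_two_mul_intCast_of_pos_of_lt_two one_pos one_lt_two)
  simpa [coeffDenom, Real.cot_eq_cos_div_sin] using h

theorem Ups_sq {ν : ℝ} (hν : ν ∈ Set.Icc (-1) 1) : Ups ν ^ 2 = 1 - ν ^ 2 :=
  Real.sq_sqrt (by nlinarith [hν.1, hν.2])

theorem hasSum_Ups_sq_div {ν : ℝ} (hν : ν ∈ Set.Ioc (-1) 1) :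
    HasSum (fun j : ℕ ↦ Ups ν ^ 2 / (4 * ((j : ℝ) + 1) ^ 2 - Ups ν ^ 2))
      (1 / 2 - π / 4 * w ν) := by
  rcases eq_or_ne ν 1 with rfl | hne
  · have hw : 1 / 2 - π / 4 * w 1 = 0 := by
      simp only [w, if_true]
      field_simp
      ring
    rw [hw]
    exact hasSum_zero.congr_fun fun j ↦ by simp [Ups]
  · have hpos : 0 < Ups ν :=
      Real.sqrt_pos.2 (by nlinarith [hν.1, lt_of_le_of_ne hν.2 hne])
    have hlt : Ups ν < 2 := by nlinarith [Ups_sq (Set.Ioc_subset_Icc_self hν), sq_nonneg ν]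
    rw [w, if_neg hne]
    exact hasSum_sq_div_four_mul_sq_sub_sq (ne_two_mul_intCast_of_pos_of_lt_two hpos hlt)

theorem hasSum_w {ν : ℝ} (hν : ν ∈ Set.Ioc (-1) 1) : HasSum (wTerm ν) (w ν) := by
  have hUps := Ups_sq (Set.Ioc_subset_Icc_self hν)
  have hvalue : w ν = 4 / π * (1 / 2 - (1 / 2 - π / 4 * w ν)) := by
    field_simp
    ring
  rw [hvalue]
  refine ((hasSum_one_div_coeffDenom.sub (hasSum_Ups_sq_div hν)).mul_left (4 / π)).congr_fun
    fun j ↦ ?_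
  have ha := coeffDenom_pos j
  have hden : 4 * ((j : ℝ) + 1) ^ 2 - Ups ν ^ 2 = coeffDenom j + ν ^ 2 := by
    rw [hUps, coeffDenom]
    ring
  rw [wTerm, hden, hUps, sixteen_mul_sq_eq_four_mul_coeffDenom_add_one]
  field_simp
  ring

theorem summable_F_coeff {k : ℕ} (hk : k ≠ 0) :
    Summable fun j : ℕ ↦ 16 * ((j : ℝ) + 1) ^ 2 / (π * coeffDenom j ^ (k + 1)) := by
  have hpow {m : ℕ} (hm : m ≠ 0) : Summable fun j ↦ (1 / coeffDenom j) ^ m :=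
    summable_pow_of_nonneg_of_le_one hasSum_one_div_coeffDenom.summable
      (fun j ↦ (one_div_pos.2 (coeffDenom_pos j)).le)
      (fun j ↦ (div_le_one (coeffDenom_pos j)).2 (one_le_coeffDenom j)) hm
  refine (((hpow hk).add (hpow (Nat.add_one_ne_zero k))).mul_left (4 / π)).congr fun j ↦ ?_
  have ha := coeffDenom_pos j
  rw [sixteen_mul_sq_eq_four_mul_coeffDenom_add_one, one_div_pow, one_div_pow]
  field_simp
  ring

theorem hasSum_F (n : ℕ) (ν : ℝ) :
    HasSum (fun j ↦ wTerm ν j * (1 - (-(ν ^ 2 / coeffDenom j)) ^ n)) (F n ν) := by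
  have hF : HasSum (fun j : ℕ ↦ ∑ k ∈ Finset.Icc 1 n, (-1 : ℝ) ^ (k + 1)
      * (16 * ((j : ℝ) + 1) ^ 2 / (π * coeffDenom j ^ (k + 1))) * ν ^ (2 * k)) (F n ν) :=
    hasSum_sum fun k hk ↦
      ((summable_F_coeff (Nat.one_le_iff_ne_zero.1 (Finset.mem_Icc.1 hk).1)).hasSum.mul_left
        _).mul_right _
  refine hF.congr_fun fun j ↦ ?_
  have ha := coeffDenom_pos j
  have hgeom := sum_Icc_neg_one_pow_mul_div_pow_mul_pow ha.ne'
    (by positivity : coeffDenom j + ν ^ 2 ≠ 0) (16 * ((j : ℝ) + 1) ^ 2 / π) n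
  simp only [div_div, ← pow_mul] at hgeom
  rw [hgeom, wTerm]
  field_simp

theorem hasSum_w_sub_F {ν : ℝ} (hν : ν ∈ Set.Ioc (-1) 1) (n : ℕ) :
    HasSum (fun j ↦ wTerm ν j * (-(ν ^ 2 / coeffDenom j)) ^ n) (w ν - F n ν) :=
  ((hasSum_w hν).sub (hasSum_F n ν)).congr_fun fun j ↦ by ring

theorem F_le_w_le_F_general {m n : ℕ} (hm : Even m) (hn : Odd n) {ν : ℝ}
    (hν : ν ∈ Set.Ioc (-1) 1) : F m ν ≤ w ν ∧ w ν ≤ F n ν := by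
  have hratio (j : ℕ) : -(ν ^ 2 / coeffDenom j) ≤ 0 :=
    neg_nonpos.2 (div_nonneg (sq_nonneg ν) (coeffDenom_pos j).le)
  constructor
  · exact sub_nonneg.1 ((hasSum_w_sub_F hν m).nonneg fun j ↦
      mul_nonneg (wTerm_nonneg ν j) (hm.pow_nonneg _))
  · exact sub_nonpos.1 ((hasSum_w_sub_F hν n).nonpos fun j ↦
      mul_nonpos_of_nonneg_of_nonpos (wTerm_nonneg ν j) (hn.pow_nonpos (hratio j)))

/-- For every n ≥ 1 and ν ∈ [0,1] one has F_{2n}(ν) ≤ w_ν ≤ F_{2n−1}(ν). -/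
theorem F_le_w_le_F (n : ℕ) (hn : 1 ≤ n) (ν : ℝ) (hν : ν ∈ Set.Icc (0 : ℝ) 1) :
    F (2 * n) ν ≤ w ν ∧ w ν ≤ F (2 * n - 1) ν :=
  F_le_w_le_F_general (even_two_mul n) ⟨n - 1, by omega⟩ ⟨by linarith [hν.1], hν.2⟩
end

section
/- For every ν ∈ [0,1], setting b_ν := 1 − ((√(225+4ν²) − 8ν)/15)², one has for every integer κ with |κ| ≥ 2 and every τ ∈ ℝ the inequality ν² + b_ν/4 + κ²·b_ν + τ²·b_ν ≥ √(4κ²ν² + 4ν²τ² + κ²·b_ν²). -/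
/-- b_ν := 1 − ((√(225+4ν²) − 8ν)/15)². -/
noncomputable def bnu (ν : ℝ) : ℝ :=
  1 - ((Real.sqrt (225 + 4 * ν ^ 2) - 8 * ν) / 15) ^ 2

/-!
Put `s = κ² + τ²` and `a = ν² + b_ν / 4`. Since `τ² b_ν² ≥ 0`, it is enough that the quadratic
`(a + s b_ν)² - s (4ν² + b_ν²)` in `s` is nonnegative for `s ≥ 4`. The number `b_ν` is such that
`s = 4` is a root, which is equality in the theorem at `|κ| = 2`, `τ = 0`. The product of the roots
is `a² / b_ν²`, so the other root is at most `4` as long as `a ≤ 4 b_ν`, that is,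
`0 ≤ ν ≤ √15 / 2`.
-/

theorem mul_le_sq_add_mul_of_root {R : Type*} [CommRing R] [LinearOrder R]
    [IsStrictOrderedRing R] {a b c s₀ s : R} (hs₀ : 0 < s₀)
    (hroot : s₀ * c = (a + s₀ * b) ^ 2) (hab : a ^ 2 ≤ (s₀ * b) ^ 2) (hs : s₀ ≤ s) :
    s * c ≤ (a + s * b) ^ 2 := by
  have hfactor : s₀ * ((a + s * b) ^ 2 - s * c) = (s - s₀) * (s * s₀ * b ^ 2 - a ^ 2) := by
    linear_combination -s * hroot
  have hother : a ^ 2 ≤ s * s₀ * b ^ 2 := calc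
    a ^ 2 ≤ s₀ * s₀ * b ^ 2 := by linarith
    _ ≤ s * s₀ * b ^ 2 := by gcongr
  refine sub_nonneg.1 (nonneg_of_mul_nonneg_right ?_ hs₀)
  rw [hfactor]
  exact mul_nonneg (sub_nonneg.2 hs) (sub_nonneg.2 hother)

theorem bnu_eq (ν : ℝ) : bnu ν = (16 * ν * √(225 + 4 * ν ^ 2) - 68 * ν ^ 2) / 225 := by
  have hsqrt : √(225 + 4 * ν ^ 2) ^ 2 = 225 + 4 * ν ^ 2 := Real.sq_sqrt (by positivity)
  unfold bnu
  linear_combination (-1 / 225) * hsqrt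

theorem four_mul_four_mul_sq_add_bnu_sq (ν : ℝ) :
    4 * (4 * ν ^ 2 + bnu ν ^ 2) = (ν ^ 2 + bnu ν / 4 + 4 * bnu ν) ^ 2 := by
  have hsqrt : √(225 + 4 * ν ^ 2) ^ 2 = 225 + 4 * ν ^ 2 := Real.sq_sqrt (by positivity)
  rw [bnu_eq]
  linear_combination (-16 * ν ^ 2 / 225) * hsqrt

theorem sq_add_bnu_div_four_le_four_mul_bnu {ν : ℝ} (hν : ν ∈ Set.Icc 0 (√15 / 2)) :
    ν ^ 2 + bnu ν / 4 ≤ 4 * bnu ν := by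
  obtain ⟨hν₀, hν₁⟩ := hν
  have hν_sq : (2 * ν) ^ 2 ≤ 15 :=
    (Real.le_sqrt (by positivity) (by norm_num)).1 (by linarith)
  have hsqrt : 8 * ν ≤ √(225 + 4 * ν ^ 2) := Real.le_sqrt_of_sq_le (by linarith)
  have hdiff : 4 * bnu ν - (ν ^ 2 + bnu ν / 4) =
      4 / 15 * (ν * (√(225 + 4 * ν ^ 2) - 8 * ν)) := by
    rw [bnu_eq]
    ring
  rw [← sub_nonneg, hdiff]
  exact mul_nonneg (by norm_num) (mul_nonneg hν₀ (sub_nonneg.2 hsqrt))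

theorem bnu_nonneg {ν : ℝ} (hν : ν ∈ Set.Icc 0 (√15 / 2)) : 0 ≤ bnu ν := by
  linarith [sq_add_bnu_div_four_le_four_mul_bnu hν, sq_nonneg ν]

theorem noncritical_channel_ineq_general {ν : ℝ} (hν : ν ∈ Set.Icc 0 (√15 / 2)) {κ : ℝ}
    (hκ : 2 ≤ |κ|) (τ : ℝ) :
    √(4 * κ ^ 2 * ν ^ 2 + 4 * ν ^ 2 * τ ^ 2 + κ ^ 2 * bnu ν ^ 2)
      ≤ ν ^ 2 + bnu ν / 4 + κ ^ 2 * bnu ν + τ ^ 2 * bnu ν := by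
  have hb : 0 ≤ bnu ν := bnu_nonneg hν
  have hκ_sq : 2 ^ 2 ≤ κ ^ 2 := sq_le_sq.2 (by rwa [abs_two])
  have hs : 4 ≤ κ ^ 2 + τ ^ 2 := by linarith [sq_nonneg τ]
  have hab : (ν ^ 2 + bnu ν / 4) ^ 2 ≤ (4 * bnu ν) ^ 2 :=
    pow_le_pow_left₀ (by positivity) (sq_add_bnu_div_four_le_four_mul_bnu hν) 2
  refine Real.sqrt_le_iff.2 ⟨by positivity, ?_⟩
  calc 4 * κ ^ 2 * ν ^ 2 + 4 * ν ^ 2 * τ ^ 2 + κ ^ 2 * bnu ν ^ 2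
    _ ≤ (κ ^ 2 + τ ^ 2) * (4 * ν ^ 2 + bnu ν ^ 2) := by
      linarith [mul_nonneg (sq_nonneg τ) (sq_nonneg (bnu ν))]
    _ ≤ (ν ^ 2 + bnu ν / 4 + (κ ^ 2 + τ ^ 2) * bnu ν) ^ 2 :=
      mul_le_sq_add_mul_of_root four_pos (four_mul_four_mul_sq_add_bnu_sq ν) hab hs
    _ = (ν ^ 2 + bnu ν / 4 + κ ^ 2 * bnu ν + τ ^ 2 * bnu ν) ^ 2 := by ring

/-- For ν ∈ [0,1], every integer κ with |κ| ≥ 2 and every τ ∈ ℝ: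
ν² + b_ν/4 + κ²b_ν + τ²b_ν ≥ √(4κ²ν² + 4ν²τ² + κ²b_ν²). -/
theorem noncritical_channel_ineq (ν : ℝ) (hν : ν ∈ Set.Icc (0 : ℝ) 1) (κ : ℤ)
    (hκ : 2 ≤ |κ|) (τ : ℝ) :
    Real.sqrt (4 * (κ : ℝ) ^ 2 * ν ^ 2 + 4 * ν ^ 2 * τ ^ 2 + (κ : ℝ) ^ 2 * bnu ν ^ 2)
      ≤ ν ^ 2 + bnu ν / 4 + (κ : ℝ) ^ 2 * bnu ν + τ ^ 2 * bnu ν := by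
  have hone : 1 ≤ √15 / 2 := by
    linarith [Real.le_sqrt_of_sq_le (by norm_num : (2 : ℝ) ^ 2 ≤ 15)]
  exact noncritical_channel_ineq_general (Set.Icc_subset_Icc_right hone hν) (mod_cast hκ) τ
end
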